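/- Let x ∈ sl_n(ℂ) be a matrix having exactly one Jordan block for each of its eigenvalues (i.e. for each eigenvalue μ, the μ-eigenspace of x is one-dimensional). Then x is a regular point of the adjoint quotient map χ: sl_n → ℂ^{n-1} sending a matrix to the nontrivial coefficients of its characteristic polynomial, i.e. the derivative of χ at x is surjective. -/

import Mathlib

attribute [local instance] Matrix.normedAddCommGroup Matrix.normedSpace

/-- The trace-zero matrices `sl_n(ℂ)` as a subspace of all `n×n` complex matrices. -/
noncomputable def slC (n : ℕ) : Submodule ℂ (Matrix (Fin n) (Fin n) ℂ) :=
  LinearMap.ker (Matrix.traceLinearMap (Fin n) ℂ ℂ)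

/-!
Since `charpoly (M + t • E_ij) = charpoly M - t * adj(X - M)_ji`, the derivatives at `M` of the
coefficients of the characteristic polynomial are encoded by the coefficients `B_k` of
`adj(X - M) = ∑ X ^ k B_k`, regarded as a polynomial with matrix coefficients. From
`(X - M) * ∑ X ^ k B_k = charpoly M` one sees that the span of the `B_k` contains `1` and is stable
under left multiplication by `M`, hence contains every power of `M`. If the minimal and
characteristic polynomials agree, `n` of these powers are independent, so `B_0, …, B_{n-1}` are too,
and the derivatives of all `n` coefficients can be prescribed simultaneously. Prescribing `0` for
the coefficient of `X ^ (n - 1)`, whose derivative is minus the trace, gives a direction in `sl_n`.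

One-dimensional eigenspaces force the two polynomials to agree: each linear factor of `p` enlarges
`ker p(f)` by at most one dimension, so a split `p` with `p(f) = 0` has degree at least `n`.
-/

section Eigenspaces

open Module Polynomial

variable {K V V₂ V₃ : Type*} [Field K] [AddCommGroup V] [Module K V] [FiniteDimensional K V]
  [AddCommGroup V₂] [Module K V₂] [FiniteDimensional K V₂] [AddCommGroup V₃] [Module K V₃]

theorem finrank_ker_comp_le (f : V₂ →ₗ[K] V₃) (g : V →ₗ[K] V₂) :
    finrank K (f ∘ₗ g).ker ≤ finrank K f.ker + finrank K g.ker := by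
  let φ : (f ∘ₗ g).ker →ₗ[K] f.ker := g.restrict fun _ hv => hv
  have hker : finrank K φ.ker ≤ finrank K g.ker :=
    LinearMap.finrank_le_finrank_of_injective
      (f := (f ∘ₗ g).ker.subtype.restrict fun _ hv => congrArg Subtype.val hv)
      fun _ _ h => Subtype.ext (Subtype.ext (congrArg (fun u : g.ker => (u : V)) h))
  have hrange := Submodule.finrank_le φ.range
  have hφ := φ.finrank_range_add_finrank_ker
  lia

theorem finrank_ker_aeval_le_natDegree {f : End K V}
    (hf : ∀ μ, finrank K (f.eigenspace μ) ≤ 1) {p : K[X]} (hp : p.Monic) (hsplit : p.Splits) :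
    finrank K (aeval f p).ker ≤ p.natDegree := by
  have hprod (s : Multiset K) :
      finrank K (aeval f (s.map (X - C ·)).prod).ker ≤ s.card := by
    induction s using Multiset.induction_on with
    | empty =>
      rw [Multiset.map_zero, Multiset.prod_zero, map_one, End.one_eq_id, LinearMap.ker_id,
        finrank_bot, Multiset.card_zero]
    | cons μ s ih =>
      rw [Multiset.map_cons, Multiset.prod_cons, map_mul, Multiset.card_cons, add_comm]
      have hμ : (aeval f (X - C μ)).ker = f.eigenspace μ := by
        rw [map_sub, aeval_X, aeval_C, Algebra.algebraMap_eq_smul_one, End.eigenspace_def]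
      refine (finrank_ker_comp_le _ _).trans (add_le_add ?_ ih)
      exact hμ ▸ hf μ
  rw [hsplit.natDegree_eq_card_roots]
  conv_lhs => rw [hsplit.eq_prod_roots_of_monic hp]
  exact hprod p.roots

theorem minpoly_eq_charpoly_of_finrank_eigenspace_le_one {f : End K V}
    (hsplit : (minpoly K f).Splits) (hf : ∀ μ, finrank K (f.eigenspace μ) ≤ 1) :
    minpoly K f = f.charpoly := by
  have hmonic := minpoly.monic (Algebra.IsIntegral.isIntegral (R := K) f)
  refine (eq_of_monic_of_dvd_of_natDegree_le hmonic f.charpoly_monic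
    f.minpoly_dvd_charpoly ?_).symm
  have hdim := finrank_ker_aeval_le_natDegree hf hmonic hsplit
  rwa [minpoly.aeval, LinearMap.ker_zero, finrank_top, ← f.charpoly_natDegree] at hdim

end Eigenspaces

section Resolvent

open Module Polynomial Matrix

variable {K A : Type*} [Ring A] {a : A} {q : A[X]}

theorem pow_mem_span_range_coeff [CommRing K] [Algebra K A] {p : K[X]} (hp : p.Monic)
    (hq : (X - C a) * q = p.map (algebraMap K A)) (j : ℕ) :
    a ^ j ∈ Submodule.span K (Set.range q.coeff) := by
  nontriviality A
  set S := Submodule.span K (Set.range q.coeff)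
  have hcoeff (k : ℕ) : q.coeff k ∈ S := Submodule.subset_span ⟨k, rfl⟩
  have hone : (1 : A) ∈ S := by
    have hmonic : q.Monic := (monic_X_sub_C a).of_mul_monic_left (hq ▸ hp.map _)
    exact hmonic.coeff_natDegree ▸ hcoeff q.natDegree
  have hconst (c : K) : algebraMap K A c ∈ S :=
    Algebra.algebraMap_eq_smul_one (A := A) c ▸ S.smul_mem c hone
  have hmul : S ≤ S.comap (LinearMap.mulLeft K a) := by
    refine Submodule.span_le.2 (Set.range_subset_iff.2 fun k => ?_)
    change a * q.coeff k ∈ S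
    have hk := congrArg (coeff · k) hq
    cases k with
    | zero =>
      have : a * q.coeff 0 = -algebraMap K A (p.coeff 0) := by
        simpa [sub_mul, neg_eq_iff_eq_neg] using hk
      exact this ▸ S.neg_mem (hconst _)
    | succ k =>
      have : a * q.coeff (k + 1) = q.coeff k - algebraMap K A (p.coeff (k + 1)) := by
        rw [eq_sub_iff_add_eq', ← eq_sub_iff_add_eq]
        simpa [sub_mul] using hk.symm
      exact this ▸ S.sub_mem (hcoeff k) (hconst _)
  induction j with
  | zero => simpa using hone
  | succ j ih => exact pow_succ' a j ▸ hmul ih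

theorem linearIndependent_coeff_of_mul_eq_map_minpoly [Field K] [Algebra K A]
    (ha : IsIntegral K a) (hq : (X - C a) * q = (minpoly K a).map (algebraMap K A)) :
    LinearIndependent K fun k : Fin (minpoly K a).natDegree => q.coeff k := by
  set d := (minpoly K a).natDegree with hd
  have hcoeff (k : ℕ) (hk : d ≤ k) : q.coeff k = 0 := by
    nontriviality A
    have hdeg : d = 1 + q.natDegree := by
      have hq0 : q ≠ 0 := by
        rintro rfl
        exact ((minpoly.monic ha).map (algebraMap K A)).ne_zero (by simpa using hq.symm)
      rw [hd, ← (minpoly.monic ha).natDegree_map (algebraMap K A), ← hq,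
        (monic_X_sub_C a).natDegree_mul' hq0, natDegree_X_sub_C]
    exact coeff_eq_zero_of_natDegree_lt (by lia)
  have hspan : Submodule.span K (Set.range fun j : Fin d => a ^ (j : ℕ)) ≤
      Submodule.span K (Set.range fun k : Fin d => q.coeff k) := by
    refine Submodule.span_le.2 (Set.range_subset_iff.2 fun j => ?_)
    refine Submodule.span_le.2 (Set.range_subset_iff.2 fun k => ?_)
      (pow_mem_span_range_coeff (minpoly.monic ha) hq j)
    rcases lt_or_ge k d with hk | hk
    · exact Submodule.subset_span ⟨⟨k, hk⟩, rfl⟩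
    · exact hcoeff k hk ▸ Submodule.zero_mem _
  have := FiniteDimensional.span_of_finite K (Set.finite_range fun k : Fin d => q.coeff k)
  rw [linearIndependent_iff_card_le_finrank_span, Fintype.card_fin]
  calc d = finrank K (Submodule.span K (Set.range fun j : Fin d => a ^ (j : ℕ))) := by
        rw [finrank_span_eq_card (linearIndependent_pow a), Fintype.card_fin]
    _ ≤ _ := Submodule.finrank_mono hspan

theorem linearIndependent_coeff_adjugate_charmatrix {n : Type*} [Fintype n] [DecidableEq n]
    [Field K] {M : Matrix n n K} (hM : minpoly K M = M.charpoly) :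
    LinearIndependent K fun k : Fin (Fintype.card n) =>
      (matPolyEquiv M.charmatrix.adjugate).coeff k := by
  have hq : (X - C M) * matPolyEquiv M.charmatrix.adjugate =
      (minpoly K M).map (algebraMap K (Matrix n n K)) := by
    rw [← matPolyEquiv_charmatrix, ← map_mul, mul_adjugate, hM, ← matPolyEquiv_smul_one]
    rfl
  have hdeg : (minpoly K M).natDegree = Fintype.card n := by
    rw [hM, M.charpoly_natDegree_eq_dim]
  exact (linearIndependent_coeff_of_mul_eq_map_minpoly M.isIntegral hq).comp
    (Fin.cast hdeg.symm) (Fin.cast_injective _)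

end Resolvent

section CharpolyAddSingle

open Polynomial Matrix

variable {R n : Type*} [CommRing R] [Fintype n] [DecidableEq n]

theorem det_add_single (M : Matrix n n R) (i j : n) (c : R) :
    (M + single i j c).det = M.det + c * M.adjugate j i := by
  have h : M + single i j c = M.updateRow i (M i + c • Pi.single j 1) := by
    ext k l
    rcases eq_or_ne k i with rfl | hk
    · simp [single_apply, Pi.single_apply, eq_comm]
    · simp [hk, hk.symm]
  rw [h, det_updateRow_add, updateRow_eq_self, det_updateRow_smul, adjugate_apply]

theorem charpoly_add_single (M : Matrix n n R) (i j : n) (c : R) :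
    (M + single i j c).charpoly = M.charpoly - C c * M.charmatrix.adjugate j i := by
  have h : (M + single i j c).charmatrix = M.charmatrix + single i j (-C c) := by
    ext k l : 1
    simp only [charmatrix_apply, Matrix.add_apply, single_apply, C_add]
    split_ifs <;> simp [sub_eq_add_neg, add_assoc, add_comm]
  rw [charpoly, h, det_add_single, charpoly, neg_mul, sub_eq_add_neg]

end CharpolyAddSingle

theorem surjective_pi_of_linearIndependent {K V ι : Type*} [Field K] [AddCommGroup V] [Module K V]
    [Finite ι] {f : ι → V →ₗ[K] K} (hf : LinearIndependent K f) :
    Function.Surjective (LinearMap.pi f) := by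
  classical
  have := Fintype.ofFinite ι
  rw [← LinearMap.dualMap_injective_iff, injective_iff_map_eq_zero]
  intro φ hφ
  have hsum : ∑ i, φ (Pi.single i 1) • f i = 0 := by
    ext v
    rw [← hφ, LinearMap.dualMap_apply, pi_eq_sum_univ' (LinearMap.pi f v)]
    simp [mul_comm]
  ext i
  exact Fintype.linearIndependent_iff.1 hf _ hsum i

section Derivative

open Polynomial Matrix

variable {𝕜 n : Type*} [NontriviallyNormedField 𝕜] [Fintype n] [DecidableEq n]

theorem differentiable_charpoly_coeff (k : ℕ) :
    Differentiable 𝕜 fun M : Matrix n n 𝕜 => M.charpoly.coeff k := by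
  have heval (M : Matrix n n 𝕜) : M.charpoly.coeff k =
      MvPolynomial.aeval (fun ij : n × n => M ij.1 ij.2) ((charpoly.univ 𝕜 n).coeff k) :=
    (charpoly.univ_coeff_eval₂Hom n (RingHom.id 𝕜) (fun ij => M ij.1 ij.2) k).symm
  have hentry (M : Matrix n n 𝕜) (ij : n × n) :
      AnalyticAt 𝕜 (fun N : Matrix n n 𝕜 => N ij.1 ij.2) M :=
    (ContinuousLinearMap.proj (R := 𝕜) (φ := fun _ : n => 𝕜) ij.2 ∘L
      ContinuousLinearMap.proj (R := 𝕜) (φ := fun _ : n => n → 𝕜) ij.1).analyticAt M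
  rw [funext heval]
  exact fun M => (AnalyticAt.aeval_mvPolynomial (hentry M) _).differentiableAt

theorem fderiv_charpoly_coeff_single (M : Matrix n n 𝕜) (k : ℕ) (i j : n) :
    fderiv 𝕜 (fun N : Matrix n n 𝕜 => N.charpoly.coeff k) M (single i j 1) =
      -(M.charmatrix.adjugate j i).coeff k := by
  have hline : HasLineDerivAt 𝕜 (fun N : Matrix n n 𝕜 => N.charpoly.coeff k)
      (-(M.charmatrix.adjugate j i).coeff k) M (single i j 1) := by
    have haffine (t : 𝕜) : (M + t • single i j 1).charpoly.coeff k =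
        M.charpoly.coeff k - t * (M.charmatrix.adjugate j i).coeff k := by
      rw [smul_single, charpoly_add_single, coeff_sub, coeff_C_mul, smul_eq_mul, mul_one]
    simp only [HasLineDerivAt, haffine]
    simpa using ((hasDerivAt_id (0 : 𝕜)).mul_const _).const_sub (M.charpoly.coeff k)
  exact ((differentiable_charpoly_coeff k M).hasFDerivAt.hasLineDerivAt _).unique hline

theorem fderiv_charpoly_coeff_card_sub_one [Nonempty n] (M H : Matrix n n 𝕜) :
    fderiv 𝕜 (fun N : Matrix n n 𝕜 => N.charpoly.coeff (Fintype.card n - 1)) M H = -H.trace := by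
  have hline : HasLineDerivAt 𝕜
      (fun N : Matrix n n 𝕜 => N.charpoly.coeff (Fintype.card n - 1)) (-H.trace) M H := by
    have haffine (t : 𝕜) : (M + t • H).charpoly.coeff (Fintype.card n - 1) =
        -M.trace - t * H.trace := by
      rw [← neg_eq_iff_eq_neg.2 (trace_eq_neg_charpoly_coeff (M + t • H)), trace_add, trace_smul,
        smul_eq_mul, neg_add, sub_eq_add_neg]
    simp only [HasLineDerivAt, haffine]
    simpa using ((hasDerivAt_id (0 : 𝕜)).mul_const _).const_sub (-M.trace)
  exact ((differentiable_charpoly_coeff _ M).hasFDerivAt.hasLineDerivAt _).unique hline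

theorem linearIndependent_fderiv_charpoly_coeff {M : Matrix n n 𝕜}
    (hM : minpoly 𝕜 M = M.charpoly) :
    LinearIndependent 𝕜 fun k : Fin (Fintype.card n) =>
      (fderiv 𝕜 (fun N : Matrix n n 𝕜 => N.charpoly.coeff k) M : Matrix n n 𝕜 →ₗ[𝕜] 𝕜) := by
  have hadj := linearIndependent_coeff_adjugate_charmatrix hM
  rw [Fintype.linearIndependent_iff] at hadj ⊢
  refine fun c hc => hadj c (Matrix.ext fun j i => ?_)
  have hji := LinearMap.congr_fun hc (single i j 1)
  simp only [LinearMap.sum_apply, LinearMap.smul_apply, ContinuousLinearMap.coe_coe,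
    fderiv_charpoly_coeff_single, LinearMap.zero_apply] at hji
  simpa [Matrix.sum_apply, matPolyEquiv_coeff_apply] using hji

theorem exists_trace_eq_zero_and_fderiv_charpoly_coeff_eq {M : Matrix n n 𝕜}
    (hM : minpoly 𝕜 M = M.charpoly) (v : Fin (Fintype.card n - 1) → 𝕜) :
    ∃ H : Matrix n n 𝕜, H.trace = 0 ∧
      ∀ k : Fin (Fintype.card n - 1),
        fderiv 𝕜 (fun N : Matrix n n 𝕜 => N.charpoly.coeff k) M H = v k := by
  cases isEmpty_or_nonempty n
  · exact ⟨0, trace_zero n 𝕜, fun k => absurd k.2 (by simp)⟩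
  have hindep := linearIndependent_fderiv_charpoly_coeff hM
  obtain ⟨H, hH⟩ := surjective_pi_of_linearIndependent hindep
    fun k => if h : (k : ℕ) < Fintype.card n - 1 then v ⟨k, h⟩ else 0
  have hcoeff (k : Fin (Fintype.card n)) := congrFun hH k
  simp only [LinearMap.pi_apply, ContinuousLinearMap.coe_coe] at hcoeff
  have hpos : 0 < Fintype.card n := Fintype.card_pos
  refine ⟨H, ?_, fun k => (hcoeff ⟨k, by lia⟩).trans (dif_pos k.2)⟩
  rw [← neg_eq_zero, ← fderiv_charpoly_coeff_card_sub_one M H]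
  exact (hcoeff ⟨Fintype.card n - 1, by lia⟩).trans (dif_neg (lt_irrefl _))

theorem adjoint_quotient_regular_point_general {n : ℕ} {x : Matrix (Fin n) (Fin n) 𝕜}
    (hx : x ∈ LinearMap.ker (traceLinearMap (Fin n) 𝕜 𝕜)) (hreg : minpoly 𝕜 x = x.charpoly) :
    ∃ D : ↥(LinearMap.ker (traceLinearMap (Fin n) 𝕜 𝕜)) →L[𝕜] (Fin (n - 1) → 𝕜),
      HasFDerivAt
        (fun y : ↥(LinearMap.ker (traceLinearMap (Fin n) 𝕜 𝕜)) =>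
          fun k : Fin (n - 1) => (y : Matrix (Fin n) (Fin n) 𝕜).charpoly.coeff k)
        D ⟨x, hx⟩ ∧
      Function.Surjective D := by
  let D (k : ℕ) := fderiv 𝕜 (fun N : Matrix (Fin n) (Fin n) 𝕜 => N.charpoly.coeff k) x
  refine ⟨.pi fun k => (D k).comp (Submodule.subtypeL _), hasFDerivAt_pi.2 fun k =>
    HasFDerivAt.comp (g := fun N : Matrix (Fin n) (Fin n) 𝕜 => N.charpoly.coeff k) _
      (differentiable_charpoly_coeff k x).hasFDerivAt (Submodule.subtypeL _).hasFDerivAt,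
    fun v => ?_⟩
  have hcard : Fintype.card (Fin n) - 1 = n - 1 := by rw [Fintype.card_fin]
  obtain ⟨H, htrace, hH⟩ := exists_trace_eq_zero_and_fderiv_charpoly_coeff_eq hreg
    (v ∘ Fin.cast hcard)
  exact ⟨⟨H, htrace⟩, funext fun k => hH (k.cast hcard.symm)⟩

end Derivative

/-- If `x ∈ sl_n(ℂ)` has exactly one Jordan block for each eigenvalue (every eigenspace is
at most one-dimensional), then `x` is a regular point of the adjoint quotient map
`χ : sl_n → ℂ^{n-1}` sending a matrix to the nontrivial coefficients of its characteristic
polynomial: the derivative of `χ` at `x` is surjective. -/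
theorem adjoint_quotient_regular_point (n : ℕ)
    (x : Matrix (Fin n) (Fin n) ℂ) (hx : x ∈ slC n)
    (hreg : ∀ μ : ℂ,
      Module.finrank ℂ (Module.End.eigenspace (Matrix.toLin' x) μ) ≤ 1) :
    ∃ D : ↥(slC n) →L[ℂ] (Fin (n - 1) → ℂ),
      HasFDerivAt
        (fun y : ↥(slC n) =>
          fun k : Fin (n - 1) => (y : Matrix (Fin n) (Fin n) ℂ).charpoly.coeff k)
        D ⟨x, hx⟩ ∧
      Function.Surjective D :=
  adjoint_quotient_regular_point_general hx (by
    simpa [Matrix.minpoly_toLin', Matrix.charpoly_toLin'] using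
      minpoly_eq_charpoly_of_finrank_eigenspace_le_one (IsAlgClosed.splits _) hreg)
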